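/- Let N ≥ 1, d, τ > 0, let F : ℝ² → ℝ and H : ℝ → ℝ be continuous, and let u, v : ℝᴺ × ℝ → ℝ be such that u and v are twice continuously differentiable in the space variable and once continuously differentiable in time (with all these derivatives jointly continuous), v is bounded, and H∘u is bounded. Suppose for all (x, t) ∈ ℝᴺ × ℝ: ∂ₜu(x,t) = dΔu(x,t) + F(u(x,t), v(x,t)) and ∂ₜv(x,t) = dΔv(x,t) + (1/τ)(H(u(x,t)) − v(x,t)). Then for every (x, t), v(x,t) = ∫_{−∞}^{t} ∫_{ℝᴺ} (4πd(t−s))^{−N/2} exp(−‖x−y‖²/(4d(t−s))) · (1/τ) e^{−(t−s)/τ} H(u(y,s)) dy ds; consequently u is an entire solution of the nonlocal delay equation ∂ₜu = dΔu + F(u, g_w ∗∗ H(u)) on ℝᴺ × ℝ with the weak kernel g_w(t) = (1/τ)e^{−t/τ}. -/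

import Mathlib

/-!
The weight `exp (t / τ)` turns the damped equation for `v` into the inhomogeneous heat equation
with source `exp (t / τ) * H u / τ`, so only Duhamel's formula for that equation is needed.
Test a solution against `ψ (ε • ·)` times the backward heat kernel with pole `(x, t)`: moving the
derivatives onto the kernel leaves the source and terms containing `∇ψ` and `Δψ`, which are
`O(ε)` against a Gaussian. As `ε → 0` this is Duhamel's formula on `[a, b]` for `b < t`. The heat
semigroup, written as an average over a unit Gaussian, is continuous up to `t`, which gives
`b → t`; finally the weighted initial datum is `O(exp (a / τ))` and vanishes as `a → -∞`.
-/

open Set MeasureTheory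

/-- The Laplacian of `f` at `x`: the trace of the second derivative. -/
noncomputable def Lap {n : ℕ} (f : EuclideanSpace ℝ (Fin n) → ℝ)
    (x : EuclideanSpace ℝ (Fin n)) : ℝ :=
  ∑ i : Fin n, iteratedFDeriv ℝ 2 f x ![EuclideanSpace.single i (1 : ℝ), EuclideanSpace.single i 1]

/-- The heat kernel of ∂ₜ − dΔ on ℝᴺ. -/
noncomputable def heatKer (N : ℕ) (d t : ℝ) (x y : EuclideanSpace ℝ (Fin N)) : ℝ :=
  (4 * Real.pi * d * t) ^ (-(N : ℝ) / 2) * Real.exp (-‖x - y‖ ^ 2 / (4 * d * t))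

section ParametricIntegral

theorem integral_sub_eq_intervalIntegral_integral {X : Type*} [TopologicalSpace X] [T2Space X]
    [MeasurableSpace X] [BorelSpace X] {μ : Measure X} [SFinite μ] [IsFiniteMeasureOnCompacts μ]
    {F F' : X → ℝ → ℝ} {S : Set X} {a b : ℝ} (hab : a ≤ b) (hS : IsCompact S)
    (hF : ∀ y, ∀ s ∈ Icc a b, HasDerivAt (F y) (F' y s) s)
    (hF' : ContinuousOn (Function.uncurry F') (univ ×ˢ Icc a b))
    (hF'S : ∀ y ∉ S, ∀ s ∈ Icc a b, F' y s = 0) :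
    ∫ y, (F y b - F y a) ∂μ = ∫ s in a..b, ∫ y, F' y s ∂μ := by
  have hcompact : IntegrableOn (Function.uncurry F') (S ×ˢ Icc a b) (μ.prod volume) :=
    (hF'.mono (prod_mono_left (subset_univ S))).integrableOn_compact (hS.prod isCompact_Icc)
  have hint : IntegrableOn (Function.uncurry F') (univ ×ˢ Ioc a b) (μ.prod volume) :=
    (hcompact.of_forall_sdiff_eq_zero (MeasurableSet.univ.prod measurableSet_Icc) fun p hp =>
      hF'S p.1 (fun h => hp.2 ⟨h, hp.1.2⟩) p.2 hp.1.2).mono_set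
      (prod_mono_right Ioc_subset_Icc_self)
  rw [IntegrableOn, ← Measure.prod_restrict, Measure.restrict_univ, ← uIoc_of_le hab] at hint
  rw [intervalIntegral_integral_swap (f := fun s y => F' y s) hint.swap]
  refine integral_congr_ae (.of_forall fun y => ?_)
  rw [← uIcc_of_le hab] at hF hF'
  refine (intervalIntegral.integral_eq_sub_of_hasDerivAt (hF y)
    (ContinuousOn.intervalIntegrable ?_)).symm
  exact hF'.comp (f := fun s => (y, s)) (by fun_prop) fun s hs => ⟨mem_univ y, hs⟩

theorem continuousOn_intervalIntegral_of_isCompact {P : Type*} [TopologicalSpace P]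
    [FirstCountableTopology P] {T : Set P} {G : P → ℝ → ℝ} {a b : ℝ} (hT : IsCompact T)
    (hab : a ≤ b) (hG : ContinuousOn (Function.uncurry G) (T ×ˢ Icc a b)) :
    ContinuousOn (fun p => ∫ s in a..b, G p s) T := by
  obtain ⟨C, hC⟩ := (hT.prod isCompact_Icc).exists_bound_of_continuousOn hG
  simp_rw [intervalIntegral.integral_of_le hab, ← integral_Icc_eq_integral_Ioc]
  refine continuousOn_of_dominated (bound := fun _ => C) (fun p hp => ?_) (fun p hp => ?_)
    (integrableOn_const measure_Icc_lt_top.ne) ?_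
  · exact (hG.comp (f := fun s => (p, s)) (by fun_prop) fun s hs =>
      ⟨hp, hs⟩).aestronglyMeasurable measurableSet_Icc
  · exact (ae_restrict_mem measurableSet_Icc).mono fun s hs => hC (p, s) ⟨hp, hs⟩
  · exact (ae_restrict_mem measurableSet_Icc).mono fun s hs =>
      hG.comp (f := fun p => (p, s)) (by fun_prop) fun p hp => ⟨hp, hs⟩

end ParametricIntegral

section FDeriv

variable {E : Type*} [NormedAddCommGroup E] [NormedSpace ℝ E]

theorem contDiff_one_fderiv_apply {f : E → ℝ} (hf : ContDiff ℝ 2 f) (e : E) :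
    ContDiff ℝ 1 (fun y => fderiv ℝ f y e) :=
  (hf.fderiv_right (m := 1) (by norm_num)).clm_apply contDiff_const

theorem continuous_fderiv_fderiv_apply {f : E → ℝ} (hf : ContDiff ℝ 2 f) (e : E) :
    Continuous (fun y => fderiv ℝ (fun z => fderiv ℝ f z e) y e) :=
  ((contDiff_one_fderiv_apply hf e).continuous_fderiv one_ne_zero).clm_apply continuous_const

variable [FiniteDimensional ℝ E] [MeasurableSpace E] [BorelSpace E]
  {μ : Measure E} [μ.IsAddHaarMeasure]

theorem integral_mul_fderiv_eq_neg_of_hasCompactSupport {f g : E → ℝ} (hf : ContDiff ℝ 1 f)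
    (hg : ContDiff ℝ 1 g) (hgc : HasCompactSupport g) (e : E) :
    ∫ y, g y * fderiv ℝ f y e ∂μ = -∫ y, fderiv ℝ g y e * f y ∂μ := by
  have hf' : Continuous fun y => fderiv ℝ f y e :=
    (hf.continuous_fderiv one_ne_zero).clm_apply continuous_const
  have hg' : Continuous fun y => fderiv ℝ g y e :=
    (hg.continuous_fderiv one_ne_zero).clm_apply continuous_const
  exact integral_mul_fderiv_eq_neg_fderiv_mul_of_integrable
    ((hg'.mul hf.continuous).integrable_of_hasCompactSupport (hgc.fderiv_apply ℝ e).mul_right)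
    ((hg.continuous.mul hf').integrable_of_hasCompactSupport hgc.mul_right)
    ((hg.continuous.mul hf.continuous).integrable_of_hasCompactSupport hgc.mul_right)
    (fun y _ => hg.differentiable one_ne_zero y) (fun y _ => hf.differentiable one_ne_zero y)

theorem integral_mul_fderiv_fderiv_comm {f g : E → ℝ} (hf : ContDiff ℝ 2 f)
    (hg : ContDiff ℝ 2 g) (hgc : HasCompactSupport g) (e : E) :
    ∫ y, g y * fderiv ℝ (fun z => fderiv ℝ f z e) y e ∂μ =
      ∫ y, fderiv ℝ (fun z => fderiv ℝ g z e) y e * f y ∂μ := by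
  rw [integral_mul_fderiv_eq_neg_of_hasCompactSupport (contDiff_one_fderiv_apply hf e)
    (hg.of_le one_le_two) hgc, integral_mul_fderiv_eq_neg_of_hasCompactSupport
    (hf.of_le one_le_two) (contDiff_one_fderiv_apply hg e) (hgc.fderiv_apply ℝ e), neg_neg]

end FDeriv

section Lap

variable {N : ℕ} {f g : EuclideanSpace ℝ (Fin N) → ℝ}

theorem lap_eq_sum_fderiv (hf : ContDiff ℝ 2 f) (x : EuclideanSpace ℝ (Fin N)) :
    Lap f x = ∑ i : Fin N, fderiv ℝ (fun y => fderiv ℝ f y (EuclideanSpace.single i 1)) x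
      (EuclideanSpace.single i 1) := by
  have hd : DifferentiableAt ℝ (fderiv ℝ f) x :=
    (hf.fderiv_right (m := 1) (by norm_num)).differentiable one_ne_zero x
  refine Finset.sum_congr rfl fun i _ => ?_
  rw [iteratedFDeriv_two_apply, fderiv_clm_apply hd (differentiableAt_const _)]
  simp

theorem continuous_lap_of_contDiff (hf : ContDiff ℝ 2 f) : Continuous (Lap f) := by
  rw [funext (lap_eq_sum_fderiv hf)]
  exact continuous_finsetSum _ fun i _ => continuous_fderiv_fderiv_apply hf _

theorem hasCompactSupport_lap (hf : HasCompactSupport f) : HasCompactSupport (Lap f) := by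
  refine (hf.iteratedFDeriv (𝕜 := ℝ) 2).mono fun y hy h => hy ?_
  simp [Lap, h]

theorem lap_const_mul (hf : ContDiff ℝ 2 f) (c : ℝ) (x : EuclideanSpace ℝ (Fin N)) :
    Lap (fun y => c * f y) x = c * Lap f x := by
  simp only [Lap, ← smul_eq_mul, iteratedFDeriv_const_smul_apply' hf.contDiffAt,
    smul_apply, Finset.smul_sum]

theorem lap_comp_smul (hf : ContDiff ℝ 2 f) (c : ℝ) (x : EuclideanSpace ℝ (Fin N)) :
    Lap (fun y => f (c • y)) x = c ^ 2 * Lap f (c • x) := by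
  simp [Lap, iteratedFDeriv_comp_const_smul c hf, Finset.mul_sum]

theorem lap_mul (hf : ContDiff ℝ 2 f) (hg : ContDiff ℝ 2 g) (x : EuclideanSpace ℝ (Fin N)) :
    Lap (fun y => f y * g y) x = f x * Lap g x + g x * Lap f x +
      2 * ∑ i : Fin N, fderiv ℝ f x (EuclideanSpace.single i 1) *
        fderiv ℝ g x (EuclideanSpace.single i 1) := by
  rw [lap_eq_sum_fderiv (hf.mul hg), lap_eq_sum_fderiv hf, lap_eq_sum_fderiv hg]
  simp only [Finset.mul_sum, ← Finset.sum_add_distrib]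
  refine Finset.sum_congr rfl fun i _ => ?_
  set e : EuclideanSpace ℝ (Fin N) := EuclideanSpace.single i 1
  have hfd := hf.differentiable two_ne_zero
  have hgd := hg.differentiable two_ne_zero
  have hfd' := (contDiff_one_fderiv_apply hf e).differentiable one_ne_zero
  have hgd' := (contDiff_one_fderiv_apply hg e).differentiable one_ne_zero
  have hfirst : (fun y => fderiv ℝ (fun y => f y * g y) y e) =
      fun y => f y * fderiv ℝ g y e + g y * fderiv ℝ f y e := by
    funext y
    simp [fderiv_fun_mul (hfd y) (hgd y)]
  rw [hfirst, fderiv_fun_add ((hfd x).fun_mul (hgd' x)) ((hgd x).fun_mul (hfd' x)),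
    fderiv_fun_mul (hfd x) (hgd' x), fderiv_fun_mul (hgd x) (hfd' x)]
  simp only [add_apply, smul_apply, smul_eq_mul]
  ring

theorem integral_mul_lap_comm (hf : ContDiff ℝ 2 f) (hg : ContDiff ℝ 2 g)
    (hgc : HasCompactSupport g) : ∫ y, g y * Lap f y = ∫ y, Lap g y * f y := by
  simp_rw [lap_eq_sum_fderiv hf, lap_eq_sum_fderiv hg, Finset.mul_sum, Finset.sum_mul]
  rw [integral_finsetSum, integral_finsetSum]
  · exact Finset.sum_congr rfl fun i _ => integral_mul_fderiv_fderiv_comm hf hg hgc _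
  · exact fun i _ => ((continuous_fderiv_fderiv_apply hg _).mul
      hf.continuous).integrable_of_hasCompactSupport
        ((hgc.fderiv_apply ℝ _).fderiv_apply ℝ _).mul_right
  · exact fun i _ => (hg.continuous.mul
      (continuous_fderiv_fderiv_apply hf _)).integrable_of_hasCompactSupport hgc.mul_right

end Lap

section HeatKernel

variable {N : ℕ} {d σ : ℝ}

theorem heatKer_nonneg (hd : 0 < d) (hσ : 0 < σ) (x y : EuclideanSpace ℝ (Fin N)) :
    0 ≤ heatKer N d σ x y := by
  unfold heatKer
  positivity

theorem contDiff_heatKer {n : WithTop ℕ∞} (d σ : ℝ) (x : EuclideanSpace ℝ (Fin N)) :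
    ContDiff ℝ n (heatKer N d σ x) :=
  contDiff_const.mul ((((contDiff_const.sub contDiff_id).norm_sq ℝ).neg.div_const _).exp)

theorem continuousOn_heatKer (hd : 0 < d) (x : EuclideanSpace ℝ (Fin N)) :
    ContinuousOn (fun p : EuclideanSpace ℝ (Fin N) × ℝ => heatKer N d p.2 x p.1)
      {p | 0 < p.2} := by
  have hpos : ∀ p ∈ {p : EuclideanSpace ℝ (Fin N) × ℝ | 0 < p.2}, 4 * Real.pi * d * p.2 ≠ 0 ∧
      4 * d * p.2 ≠ 0 := fun p (hp : 0 < p.2) => ⟨by positivity, by positivity⟩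
  exact ContinuousOn.mul (ContinuousOn.rpow_const (by fun_prop) fun p hp => Or.inl (hpos p hp).1)
    (ContinuousOn.rexp (ContinuousOn.div (by fun_prop) (by fun_prop) fun p hp => (hpos p hp).2))

theorem fderiv_heatKer_apply (hd : 0 < d) (hσ : 0 < σ) (x y e : EuclideanSpace ℝ (Fin N)) :
    fderiv ℝ (heatKer N d σ x) y e = inner ℝ (x - y) e / (2 * d * σ) * heatKer N d σ x y := by
  have hsub : HasFDerivAt (fun z : EuclideanSpace ℝ (Fin N) => x - z)
      (-ContinuousLinearMap.id ℝ (EuclideanSpace ℝ (Fin N))) y := (hasFDerivAt_id y).const_sub x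
  have hker : heatKer N d σ x = fun z => (4 * Real.pi * d * σ) ^ (-(N : ℝ) / 2) *
      Real.exp (-‖x - z‖ ^ 2 * (4 * d * σ)⁻¹) := by
    funext z
    simp only [heatKer, div_eq_mul_inv]
  have hderiv := ((hsub.norm_sq.neg.mul_const (4 * d * σ)⁻¹).exp).const_mul
    ((4 * Real.pi * d * σ) ^ (-(N : ℝ) / 2))
  rw [hker]
  refine (DFunLike.congr_fun hderiv.fderiv e).trans ?_
  simp only [Pi.neg_apply, mul_inv_rev, neg_mul, map_sub, ContinuousLinearMap.comp_neg,
    ContinuousLinearMap.comp_id, neg_sub, smul_neg, neg_apply, smul_apply, sub_apply,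
    coe_innerSL_apply, nsmul_eq_mul, Nat.cast_ofNat, smul_eq_mul, inner_sub_left]
  field_simp
  ring

theorem fderiv_fderiv_heatKer_apply (hd : 0 < d) (hσ : 0 < σ)
    (x y e : EuclideanSpace ℝ (Fin N)) :
    fderiv ℝ (fun z => fderiv ℝ (heatKer N d σ x) z e) y e =
      ((inner ℝ (x - y) e / (2 * d * σ)) ^ 2 - ‖e‖ ^ 2 / (2 * d * σ)) * heatKer N d σ x y := by
  simp_rw [fderiv_heatKer_apply hd hσ]
  have hsub : HasFDerivAt (fun z : EuclideanSpace ℝ (Fin N) => x - z)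
      (-ContinuousLinearMap.id ℝ (EuclideanSpace ℝ (Fin N))) y := (hasFDerivAt_id y).const_sub x
  have hinner := (hsub.inner ℝ (hasFDerivAt_const e y)).mul_const (2 * d * σ)⁻¹
  have hker := ((contDiff_heatKer d σ x).differentiable one_ne_zero y).hasFDerivAt
  simp only [div_eq_mul_inv]
  refine (DFunLike.congr_fun (hinner.mul hker).fderiv e).trans ?_
  simp only [mul_inv_rev, add_apply, smul_apply, fderiv_heatKer_apply hd hσ, smul_eq_mul,
    ContinuousLinearMap.comp_apply, ContinuousLinearMap.prod_apply, neg_apply,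
    ContinuousLinearMap.id_apply, zero_apply, fderivInnerCLM_apply, inner_zero_right,
    inner_neg_left, inner_self_eq_norm_sq_to_K, Real.ringHom_apply, zero_add, mul_neg]
  field_simp
  ring

theorem lap_heatKer (hd : 0 < d) (hσ : 0 < σ) (x y : EuclideanSpace ℝ (Fin N)) :
    Lap (heatKer N d σ x) y =
      (‖x - y‖ ^ 2 / (2 * d * σ) ^ 2 - N / (2 * d * σ)) * heatKer N d σ x y := by
  rw [lap_eq_sum_fderiv (contDiff_heatKer d σ x)]
  simp_rw [fderiv_fderiv_heatKer_apply hd hσ, ← Finset.sum_mul, Finset.sum_sub_distrib, div_pow,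
    ← Finset.sum_div, EuclideanSpace.norm_sq_eq]
  simp [EuclideanSpace.inner_single_right]

theorem hasDerivAt_heatKer (hd : 0 < d) (hσ : 0 < σ) (x y : EuclideanSpace ℝ (Fin N)) :
    HasDerivAt (fun r => heatKer N d r x y) (d * Lap (heatKer N d σ x) y) σ := by
  have hpos : 0 < 4 * Real.pi * d * σ := by positivity
  have hbase : HasDerivAt (fun r : ℝ => 4 * Real.pi * d * r) (4 * Real.pi * d) σ := by
    simpa using (hasDerivAt_id σ).const_mul (4 * Real.pi * d)
  have hdenom : HasDerivAt (fun r : ℝ => 4 * d * r) (4 * d) σ := by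
    simpa using (hasDerivAt_id σ).const_mul (4 * d)
  refine ((hbase.rpow_const (p := -(N : ℝ) / 2) (Or.inl hpos.ne')).mul
    (((hasDerivAt_const σ (-‖x - y‖ ^ 2)).div hdenom (by positivity)).exp)).congr_deriv ?_
  rw [lap_heatKer hd hσ, heatKer, Real.rpow_sub_one hpos.ne', Pi.div_apply]
  field_simp
  ring

theorem continuousOn_lap_heatKer (hd : 0 < d) (x : EuclideanSpace ℝ (Fin N)) :
    ContinuousOn (fun p : EuclideanSpace ℝ (Fin N) × ℝ => Lap (heatKer N d p.2 x) p.1)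
      {p | 0 < p.2} := by
  have hpos : ∀ p ∈ {p : EuclideanSpace ℝ (Fin N) × ℝ | 0 < p.2}, 2 * d * p.2 ≠ 0 :=
    fun p (hp : 0 < p.2) => by positivity
  refine ContinuousOn.congr (.mul (.sub (.div ?_ ?_ fun p hp => pow_ne_zero 2 (hpos p hp))
    (.div ?_ ?_ hpos)) (continuousOn_heatKer hd x)) fun p hp => lap_heatKer hd hp x p.1
  all_goals fun_prop

theorem lap_mul_heatKer (hd : 0 < d) (hσ : 0 < σ) {ψ : EuclideanSpace ℝ (Fin N) → ℝ}
    (hψ : ContDiff ℝ 2 ψ) (x y : EuclideanSpace ℝ (Fin N)) :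
    d * Lap (fun z => ψ z * heatKer N d σ x z) y = d * (ψ y * Lap (heatKer N d σ x) y) +
      heatKer N d σ x y * (d * Lap ψ y + fderiv ℝ ψ y (x - y) / σ) := by
  have hgrad : ∑ i, fderiv ℝ ψ y (EuclideanSpace.single i 1) *
      fderiv ℝ (heatKer N d σ x) y (EuclideanSpace.single i 1) =
      fderiv ℝ ψ y (x - y) / (2 * d * σ) * heatKer N d σ x y := by
    conv_rhs => rw [← (EuclideanSpace.basisFun (Fin N) ℝ).sum_repr' (x - y)]
    simp only [fderiv_heatKer_apply hd hσ, map_sum, map_smul, smul_eq_mul, Finset.sum_div,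
      Finset.sum_mul, EuclideanSpace.basisFun_apply, real_inner_comm]
    exact Finset.sum_congr rfl fun i _ => by ring
  rw [lap_mul hψ (contDiff_heatKer d σ x), hgrad]
  field_simp
  ring

theorem integral_heatKer (hd : 0 < d) (hσ : 0 < σ) (x : EuclideanSpace ℝ (Fin N)) :
    ∫ y, heatKer N d σ x y = 1 := by
  have hπ : Real.pi / (1 / (4 * d * σ)) = 4 * Real.pi * d * σ := by field_simp
  calc ∫ y, heatKer N d σ x y
      = ∫ y, (4 * Real.pi * d * σ) ^ (-(N : ℝ) / 2) *
          Real.exp (-(1 / (4 * d * σ)) * ‖x - y‖ ^ 2) := by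
        simp only [heatKer, neg_div, neg_mul, one_div_mul_eq_div]
    _ = ∫ z : EuclideanSpace ℝ (Fin N), (4 * Real.pi * d * σ) ^ (-(N : ℝ) / 2) *
          Real.exp (-(1 / (4 * d * σ)) * ‖z‖ ^ 2) :=
        integral_sub_left_eq_self (fun z => (4 * Real.pi * d * σ) ^ (-(N : ℝ) / 2) *
          Real.exp (-(1 / (4 * d * σ)) * ‖z‖ ^ 2)) volume x
    _ = 1 := by
        rw [integral_const_mul, GaussianFourier.integral_rexp_neg_mul_sq_norm (by positivity),
          finrank_euclideanSpace_fin, hπ, neg_div, Real.rpow_neg (by positivity)]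
        exact inv_mul_cancel₀ (by positivity)

theorem integrable_heatKer (hd : 0 < d) (hσ : 0 < σ) (x : EuclideanSpace ℝ (Fin N)) :
    Integrable (heatKer N d σ x) :=
  Integrable.of_integral_ne_zero (by simp [integral_heatKer hd hσ])

theorem heatKer_mul_one_add_norm_le (hd : 0 < d) (hσ : 0 < σ) (x y : EuclideanSpace ℝ (Fin N)) :
    heatKer N d σ x y * (1 + ‖x - y‖) ≤
      2 ^ ((N : ℝ) / 2) * Real.exp (2 * d * σ) * heatKer N d (2 * σ) x y := by
  have hlin : 1 + ‖x - y‖ ≤ Real.exp (2 * d * σ + ‖x - y‖ ^ 2 / (8 * d * σ)) := by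
    refine (add_comm _ _).trans_le ((Real.add_one_le_exp _).trans (Real.exp_le_exp.2 ?_))
    rw [← sub_nonneg]
    calc 0 ≤ (4 * d * σ - ‖x - y‖) ^ 2 / (8 * d * σ) := by positivity
      _ = _ := by field_simp; ring
  have hscale : (4 * Real.pi * d * (2 * σ)) ^ (-(N : ℝ) / 2) * 2 ^ ((N : ℝ) / 2) =
      (4 * Real.pi * d * σ) ^ (-(N : ℝ) / 2) := by
    rw [show 4 * Real.pi * d * (2 * σ) = 4 * Real.pi * d * σ * 2 by ring,
      Real.mul_rpow (by positivity) two_pos.le, mul_assoc, ← Real.rpow_add two_pos]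
    simp [neg_div]
  have hexp : Real.exp (-‖x - y‖ ^ 2 / (4 * d * σ)) *
      Real.exp (2 * d * σ + ‖x - y‖ ^ 2 / (8 * d * σ)) =
      Real.exp (2 * d * σ) * Real.exp (-‖x - y‖ ^ 2 / (4 * d * (2 * σ))) := by
    rw [← Real.exp_add, ← Real.exp_add]
    congr 1
    field_simp
    ring
  calc heatKer N d σ x y * (1 + ‖x - y‖)
      ≤ heatKer N d σ x y * Real.exp (2 * d * σ + ‖x - y‖ ^ 2 / (8 * d * σ)) :=
        mul_le_mul_of_nonneg_left hlin (heatKer_nonneg hd hσ x y)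
    _ = (4 * Real.pi * d * σ) ^ (-(N : ℝ) / 2) *
          (Real.exp (2 * d * σ) * Real.exp (-‖x - y‖ ^ 2 / (4 * d * (2 * σ)))) := by
        rw [heatKer, mul_assoc, hexp]
    _ = _ := by
        rw [heatKer, ← hscale]
        ring

theorem integrable_heatKer_mul_one_add_norm (hd : 0 < d) (hσ : 0 < σ)
    (x : EuclideanSpace ℝ (Fin N)) :
    Integrable fun y => heatKer N d σ x y * (1 + ‖x - y‖) := by
  have hcont := (contDiff_heatKer (n := 0) d σ x).continuous
  refine ((integrable_heatKer hd (mul_pos two_pos hσ) x).const_mul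
    (2 ^ ((N : ℝ) / 2) * Real.exp (2 * d * σ))).mono' (by fun_prop) (.of_forall fun y => ?_)
  rw [Real.norm_of_nonneg (mul_nonneg (heatKer_nonneg hd hσ x y) (by positivity))]
  exact heatKer_mul_one_add_norm_le hd hσ x y

end HeatKernel

section HeatSemigroup

variable {N : ℕ} {d σ M : ℝ} {f : EuclideanSpace ℝ (Fin N) → ℝ} {x : EuclideanSpace ℝ (Fin N)}

/-- The heat semigroup `e^{σdΔ} f` at `x`. The Gaussian is rescaled to unit time, so that the
formula has no singularity at `σ = 0`, where it gives `f x`; see `integral_heatKer_mul` for the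
usual form. -/
noncomputable def heatSemigroup (d σ : ℝ) (f : EuclideanSpace ℝ (Fin N) → ℝ)
    (x : EuclideanSpace ℝ (Fin N)) : ℝ :=
  ∫ z, heatKer N d 1 0 z * f (x + √σ • z)

theorem heatKer_add_sqrt_smul (hd : 0 < d) (hσ : 0 < σ) (x z : EuclideanSpace ℝ (Fin N)) :
    √σ ^ N * heatKer N d σ x (x + √σ • z) = heatKer N d 1 0 z := by
  have hpow : √σ ^ N = σ ^ ((N : ℝ) / 2) := by
    rw [Real.sqrt_eq_rpow, ← Real.rpow_natCast, ← Real.rpow_mul hσ.le]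
    ring_nf
  have hexp : -‖x - (x + √σ • z)‖ ^ 2 / (4 * d * σ) = -‖0 - z‖ ^ 2 / (4 * d * 1) := by
    rw [sub_add_cancel_left, norm_neg, norm_smul, zero_sub, norm_neg, mul_pow, Real.norm_eq_abs,
      sq_abs, Real.sq_sqrt hσ.le]
    field_simp
  have hbase : (4 * Real.pi * d * σ) ^ (-(N : ℝ) / 2) =
      (4 * Real.pi * d * 1) ^ (-(N : ℝ) / 2) * σ ^ (-(N : ℝ) / 2) := by
    rw [mul_one, Real.mul_rpow (by positivity) hσ.le]
  rw [heatKer, heatKer, hexp, hbase, hpow, neg_div, Real.rpow_neg hσ.le]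
  field_simp

theorem integral_heatKer_mul (hd : 0 < d) (hσ : 0 < σ) (f : EuclideanSpace ℝ (Fin N) → ℝ)
    (x : EuclideanSpace ℝ (Fin N)) :
    ∫ y, heatKer N d σ x y * f y = heatSemigroup d σ f x := by
  have hs : 0 < √σ ^ N := pow_pos (Real.sqrt_pos.2 hσ) N
  simp_rw [heatSemigroup, ← heatKer_add_sqrt_smul hd hσ x, mul_assoc]
  rw [integral_const_mul, Measure.integral_comp_smul volume
    (fun y => heatKer N d σ x (x + y) * f (x + y)), finrank_euclideanSpace_fin, abs_inv,
    abs_of_pos hs, smul_eq_mul, mul_inv_cancel_left₀ hs.ne',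
    integral_add_left_eq_self (fun y => heatKer N d σ x y * f y)]

theorem heatSemigroup_zero (hd : 0 < d) (f : EuclideanSpace ℝ (Fin N) → ℝ)
    (x : EuclideanSpace ℝ (Fin N)) : heatSemigroup d 0 f x = f x := by
  simp [heatSemigroup, integral_mul_const, integral_heatKer hd one_pos]

theorem heatSemigroup_const_mul (c : ℝ) :
    heatSemigroup d σ (fun y => c * f y) x = c * heatSemigroup d σ f x := by
  simp only [heatSemigroup, mul_left_comm _ c, integral_const_mul]

theorem abs_heatSemigroup_le (hd : 0 < d) (hf : ∀ y, |f y| ≤ M) : |heatSemigroup d σ f x| ≤ M := by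
  have hle : ∀ z, ‖heatKer N d 1 0 z * f (x + √σ • z)‖ ≤ heatKer N d 1 0 z * M := fun z => by
    rw [norm_mul, Real.norm_of_nonneg (heatKer_nonneg hd one_pos 0 z)]
    exact mul_le_mul_of_nonneg_left (hf _) (heatKer_nonneg hd one_pos 0 z)
  calc |heatSemigroup d σ f x| ≤ ∫ z, heatKer N d 1 0 z * M :=
        norm_integral_le_of_norm_le ((integrable_heatKer hd one_pos 0).mul_const M) (.of_forall hle)
    _ = M := by rw [integral_mul_const, integral_heatKer hd one_pos, one_mul]

theorem continuousOn_heatSemigroup {P : Type*} [TopologicalSpace P] [FirstCountableTopology P]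
    {T : Set P} {σ : P → ℝ} {f : P → EuclideanSpace ℝ (Fin N) → ℝ} {C β : ℝ} (hd : 0 < d)
    (hσ : ContinuousOn σ T) (hσβ : ∀ p ∈ T, σ p ≤ β)
    (hf : ContinuousOn (Function.uncurry f) (T ×ˢ univ))
    (hfC : ∀ p ∈ T, ∀ y, |f p y| ≤ C * (1 + ‖x - y‖)) :
    ContinuousOn (fun p => heatSemigroup d (σ p) (f p) x) T := by
  have hK : Continuous (heatKer N d 1 0) := (contDiff_heatKer (n := 0) d 1 0).continuous
  refine continuousOn_of_dominated (fun p hp => ?_) (fun p hp => .of_forall fun z => ?_)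
    ((integrable_heatKer_mul_one_add_norm hd one_pos 0).const_mul (C * (1 + √β)))
    (.of_forall fun z => ?_)
  · have hfp : Continuous (f p) :=
      hf.comp_continuous (f := fun y => (p, y)) (by fun_prop) fun y => ⟨hp, mem_univ y⟩
    exact Continuous.aestronglyMeasurable (by fun_prop)
  · have hKz := heatKer_nonneg hd one_pos 0 z
    have hC : 0 ≤ C := by simpa using (abs_nonneg _).trans (hfC p hp x)
    have hnorm : ‖x - (x + √(σ p) • z)‖ = √(σ p) * ‖z‖ := by
      rw [sub_add_cancel_left, norm_neg, norm_smul, Real.norm_of_nonneg (Real.sqrt_nonneg _)]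
    rw [norm_mul, Real.norm_of_nonneg hKz, Real.norm_eq_abs]
    calc heatKer N d 1 0 z * |f p (x + √(σ p) • z)|
        ≤ heatKer N d 1 0 z * (C * (1 + √(σ p) * ‖z‖)) := by
          rw [← hnorm]
          exact mul_le_mul_of_nonneg_left (hfC p hp _) hKz
      _ ≤ heatKer N d 1 0 z * (C * ((1 + √β) * (1 + ‖z‖))) := by
          gcongr
          have hle : √(σ p) * ‖z‖ ≤ √β * ‖z‖ := by
            gcongr
            exact hσβ p hp
          linarith [Real.sqrt_nonneg β, norm_nonneg z]
      _ = C * (1 + √β) * (heatKer N d 1 0 z * (1 + ‖0 - z‖)) := by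
          rw [zero_sub, norm_neg]
          ring
  · refine continuousOn_const.mul (hf.comp (f := fun p => (p, x + √(σ p) • z)) ?_
      fun p hp => ⟨hp, mem_univ _⟩)
    fun_prop

theorem continuousOn_heatSemigroup_sub {f : EuclideanSpace ℝ (Fin N) → ℝ → ℝ} {a t : ℝ}
    (hd : 0 < d) (hf : Continuous fun p : EuclideanSpace ℝ (Fin N) × ℝ => f p.1 p.2)
    (hfM : ∀ s ∈ Icc a t, ∀ y, |f y s| ≤ M) :
    ContinuousOn (fun s => heatSemigroup d (t - s) (fun y => f y s) x) (Icc a t) :=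
  continuousOn_heatSemigroup (C := M) (β := t - a) hd (by fun_prop)
    (fun s hs => sub_le_sub_left hs.1 t)
    (hf.comp continuous_swap).continuousOn
    fun s hs y => (hfM s hs y).trans
      (le_mul_of_one_le_right ((abs_nonneg _).trans (hfM s hs y)) (by simp))

end HeatSemigroup

section Cutoff

variable {N : ℕ} {d δ r ε t M C₀ C₁ C₂ : ℝ} {x y : EuclideanSpace ℝ (Fin N)}
  {ψ w g : EuclideanSpace ℝ (Fin N) → ℝ}

/-- What replaces the source slice `g` in Duhamel's formula at `x` when the solution, with slice `w`
at time `r` before the evaluation time, is cut off by `ψ`. Unlike the source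
`ψ * g - d * w * Δψ - 2 * d * ⟪∇ψ, ∇w⟫` of `ψ * w`, it does not involve `∇w`: the gradient has been
moved onto the heat kernel `K`, where `∇K = K * (x - y) / (2 * d * r)`; hence the dependence on `x`
and `r`. -/
noncomputable def cutoffSource (d r : ℝ) (x : EuclideanSpace ℝ (Fin N))
    (ψ w g : EuclideanSpace ℝ (Fin N) → ℝ) (y : EuclideanSpace ℝ (Fin N)) : ℝ :=
  ψ y * g y + (d * Lap ψ y + fderiv ℝ ψ y (x - y) / r) * w y

theorem cutoffSource_comp_smul (hψ : ContDiff ℝ 2 ψ) :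
    cutoffSource d r x (fun z => ψ (ε • z)) w g y = ψ (ε • y) * g y +
      (d * (ε ^ 2 * Lap ψ (ε • y)) + ε * fderiv ℝ ψ (ε • y) (x - y) / r) * w y := by
  have hfderiv : fderiv ℝ (fun z => ψ (ε • z)) y = ε • fderiv ℝ ψ (ε • y) := fderiv_comp_smul ε
  rw [cutoffSource, lap_comp_smul hψ, hfderiv, smul_apply, smul_eq_mul]

theorem abs_cutoffSource_comp_smul_le (hd : 0 < d) (hψ : ContDiff ℝ 2 ψ) (hε : ε ∈ Icc (0 : ℝ) 1)
    (hδ : 0 < δ) (hδr : δ ≤ r) (h₀ : ∀ z, ‖ψ z‖ ≤ C₀) (h₁ : ∀ z, ‖fderiv ℝ ψ z‖ ≤ C₁)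
    (h₂ : ∀ z, ‖Lap ψ z‖ ≤ C₂) (hw : |w y| ≤ M) (hg : |g y| ≤ M) :
    |cutoffSource d r x (fun z => ψ (ε • z)) w g y| ≤
      (C₀ + d * C₂ + C₁ / δ) * M * (1 + ‖x - y‖) := by
  have hC₀ : 0 ≤ C₀ := (norm_nonneg _).trans (h₀ 0)
  have hC₁ : 0 ≤ C₁ := (norm_nonneg _).trans (h₁ 0)
  have hC₂ : 0 ≤ C₂ := (norm_nonneg _).trans (h₂ 0)
  have hM : 0 ≤ M := (abs_nonneg _).trans hw
  have hgrad : |ε * fderiv ℝ ψ (ε • y) (x - y) / r| ≤ C₁ / δ * ‖x - y‖ := by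
    rw [abs_div, abs_mul, abs_of_nonneg hε.1, abs_of_pos (hδ.trans_le hδr), div_mul_eq_mul_div]
    refine div_le_div₀ (by positivity) ?_ hδ hδr
    exact (mul_le_of_le_one_left (abs_nonneg _) hε.2).trans
      ((fderiv ℝ ψ (ε • y)).le_of_opNorm_le (h₁ _) _)
  have hlap : |d * (ε ^ 2 * Lap ψ (ε • y))| ≤ d * C₂ := by
    rw [abs_mul, abs_of_pos hd, abs_mul, abs_of_nonneg (sq_nonneg ε)]
    exact mul_le_mul_of_nonneg_left ((mul_le_of_le_one_left (abs_nonneg _)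
      (pow_le_one₀ hε.1 hε.2)).trans (h₂ _)) hd.le
  rw [cutoffSource_comp_smul hψ]
  calc |ψ (ε • y) * g y +
        (d * (ε ^ 2 * Lap ψ (ε • y)) + ε * fderiv ℝ ψ (ε • y) (x - y) / r) * w y|
      ≤ C₀ * M + (d * C₂ + C₁ / δ * ‖x - y‖) * M := by
        refine (abs_add_le _ _).trans (add_le_add ?_ ?_) <;> rw [abs_mul]
        · exact mul_le_mul (h₀ _) hg (abs_nonneg _) hC₀
        · exact mul_le_mul ((abs_add_le _ _).trans (add_le_add hlap hgrad)) hw (abs_nonneg _)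
            (by positivity)
    _ ≤ (C₀ + d * C₂ + C₁ / δ) * M * (1 + ‖x - y‖) := by
        have h₃ : 0 ≤ (C₀ + d * C₂) * M * ‖x - y‖ + C₁ / δ * M := by positivity
        linarith

end Cutoff

/-- `w` is a classical solution of the inhomogeneous heat equation `∂ₜw = dΔw + g` on `ℝᴺ × ℝ`:
it is `C¹` in time and `C²` in space, with jointly continuous `w`, `∂ₜw` and `Δw`. -/
structure IsHeatSolution {N : ℕ} (d : ℝ) (w g : EuclideanSpace ℝ (Fin N) → ℝ → ℝ) : Prop where
  contDiff_time : ∀ x, ContDiff ℝ 1 (w x)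
  contDiff_space : ∀ t, ContDiff ℝ 2 fun y => w y t
  continuous : Continuous fun p : EuclideanSpace ℝ (Fin N) × ℝ => w p.1 p.2
  continuous_deriv : Continuous fun p : EuclideanSpace ℝ (Fin N) × ℝ => deriv (w p.1) p.2
  continuous_lap : Continuous fun p : EuclideanSpace ℝ (Fin N) × ℝ => Lap (fun y => w y p.2) p.1
  deriv_eq : ∀ x t, deriv (w x) t = d * Lap (fun y => w y t) x + g x t

namespace IsHeatSolution

variable {N : ℕ} {d a b t : ℝ} {w g : EuclideanSpace ℝ (Fin N) → ℝ → ℝ}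
  {x : EuclideanSpace ℝ (Fin N)}

theorem hasDerivAt (hw : IsHeatSolution d w g) (x : EuclideanSpace ℝ (Fin N)) (t : ℝ) :
    HasDerivAt (w x) (deriv (w x) t) t :=
  ((hw.contDiff_time x).differentiable one_ne_zero t).hasDerivAt

theorem continuous_source (hw : IsHeatSolution d w g) :
    Continuous fun p : EuclideanSpace ℝ (Fin N) × ℝ => g p.1 p.2 := by
  refine (hw.continuous_deriv.sub (hw.continuous_lap.const_mul d)).congr fun p => ?_
  change deriv (w p.1) p.2 - d * Lap (fun y => w y p.2) p.1 = g p.1 p.2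
  rw [hw.deriv_eq, add_sub_cancel_left]

theorem integral_mul_deriv (hw : IsHeatSolution d w g) {η : EuclideanSpace ℝ (Fin N) → ℝ}
    (hη : ContDiff ℝ 2 η) (hηc : HasCompactSupport η) (s : ℝ) :
    ∫ y, η y * deriv (w y) s = ∫ y, (d * Lap η y * w y s + η y * g y s) := by
  have hws := (hw.contDiff_space s).continuous
  have hgs : Continuous fun y => g y s :=
    hw.continuous_source.comp (f := fun y => (y, s)) (by fun_prop)
  have hη_lap : Integrable fun y => η y * Lap (fun z => w z s) y :=
    (hη.continuous.mul (continuous_lap_of_contDiff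
      (hw.contDiff_space s))).integrable_of_hasCompactSupport hηc.mul_right
  have hlap_η : Integrable fun y => Lap η y * w y s :=
    ((continuous_lap_of_contDiff hη).mul hws).integrable_of_hasCompactSupport
      (hasCompactSupport_lap hηc).mul_right
  have hη_g : Integrable fun y => η y * g y s :=
    (hη.continuous.mul hgs).integrable_of_hasCompactSupport hηc.mul_right
  simp_rw [hw.deriv_eq, mul_add, mul_left_comm _ d, mul_assoc]
  rw [integral_add (hη_lap.const_mul d) hη_g, integral_add (hlap_η.const_mul d) hη_g,
    integral_const_mul, integral_const_mul, integral_mul_lap_comm (hw.contDiff_space s) hη hηc]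

theorem integral_deriv_mul_add_mul_deriv (hw : IsHeatSolution d w g)
    {η η' : EuclideanSpace ℝ (Fin N) → ℝ} (hη : ContDiff ℝ 2 η) (hηc : HasCompactSupport η)
    (hη' : Continuous η') (hη'c : HasCompactSupport η') (s : ℝ) :
    ∫ y, (η' y * w y s + η y * deriv (w y) s) =
      ∫ y, ((η' y + d * Lap η y) * w y s + η y * g y s) := by
  have hws := (hw.contDiff_space s).continuous
  have hgs : Continuous fun y => g y s :=
    hw.continuous_source.comp (f := fun y => (y, s)) (by fun_prop)
  have hdws : Continuous fun y => deriv (w y) s :=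
    hw.continuous_deriv.comp (f := fun y => (y, s)) (by fun_prop)
  have hη'w : Integrable fun y => η' y * w y s :=
    (hη'.mul hws).integrable_of_hasCompactSupport hη'c.mul_right
  have hηw' : Integrable fun y => η y * deriv (w y) s :=
    (hη.continuous.mul hdws).integrable_of_hasCompactSupport hηc.mul_right
  have hsource : Integrable fun y => d * Lap η y * w y s + η y * g y s :=
    ((((continuous_lap_of_contDiff hη).const_mul d).mul hws).integrable_of_hasCompactSupport
      (hasCompactSupport_lap hηc).mul_left.mul_right).add
    ((hη.continuous.mul hgs).integrable_of_hasCompactSupport hηc.mul_right)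
  simp only [add_mul, add_assoc]
  rw [integral_add hη'w hηw', integral_add hη'w hsource, hw.integral_mul_deriv hη hηc]

theorem integral_mul_sub_integral_mul_eq (hw : IsHeatSolution d w g)
    {φ φ' : EuclideanSpace ℝ (Fin N) → ℝ → ℝ} {S : Set (EuclideanSpace ℝ (Fin N))} (hab : a ≤ b)
    (hS : IsCompact S) (hφS : ∀ y ∉ S, ∀ s, φ y s = 0)
    (hφx : ∀ s ∈ Icc a b, ContDiff ℝ 2 fun y => φ y s)
    (hφt : ∀ y, ∀ s ∈ Icc a b, HasDerivAt (φ y) (φ' y s) s)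
    (hφ : ContinuousOn (Function.uncurry φ) (univ ×ˢ Icc a b))
    (hφ' : ContinuousOn (Function.uncurry φ') (univ ×ˢ Icc a b)) :
    (∫ y, φ y b * w y b) - ∫ y, φ y a * w y a =
      ∫ s in a..b, ∫ y, ((φ' y s + d * Lap (fun z => φ z s) y) * w y s + φ y s * g y s) := by
  have hφ'S : ∀ y ∉ S, ∀ s ∈ Icc a b, φ' y s = 0 := fun y hy s hs =>
    (hφt y s hs).unique (funext (hφS y hy) ▸ hasDerivAt_const s 0)
  have hφc : ∀ s, HasCompactSupport fun y => φ y s := fun s => .intro hS fun y hy => hφS y hy s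
  have hend : ∀ s ∈ Icc a b, Integrable fun y => φ y s * w y s := fun s hs =>
    ((hφx s hs).continuous.mul (hw.contDiff_space s).continuous).integrable_of_hasCompactSupport
      (hφc s).mul_right
  rw [← integral_sub (hend b (right_mem_Icc.2 hab)) (hend a (left_mem_Icc.2 hab)),
    integral_sub_eq_intervalIntegral_integral (F := fun y s => φ y s * w y s)
      (F' := fun y s => φ' y s * w y s + φ y s * deriv (w y) s) hab hS
      (fun y s hs => (hφt y s hs).mul (hw.hasDerivAt y s))
      ((hφ'.mul hw.continuous.continuousOn).add (hφ.mul hw.continuous_deriv.continuousOn))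
      (fun y hy s hs => by simp [hφS y hy, hφ'S y hy s hs])]
  refine intervalIntegral.integral_congr fun s hs => ?_
  rw [uIcc_of_le hab] at hs
  have hslice : Continuous fun y => φ' y s :=
    hφ'.comp_continuous (f := fun y => (y, s)) (by fun_prop) fun y => ⟨mem_univ y, hs⟩
  exact hw.integral_deriv_mul_add_mul_deriv (hφx s hs) (hφc s) hslice
    (.intro hS fun y hy => hφ'S y hy s hs) s

theorem heatSemigroup_mul_sub_eq (hw : IsHeatSolution d w g) (hd : 0 < d) (hab : a ≤ b)
    (hbt : b < t) {ψ : EuclideanSpace ℝ (Fin N) → ℝ} (hψ : ContDiff ℝ 2 ψ)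
    (hψc : HasCompactSupport ψ) (x : EuclideanSpace ℝ (Fin N)) :
    heatSemigroup d (t - b) (fun y => ψ y * w y b) x -
      heatSemigroup d (t - a) (fun y => ψ y * w y a) x =
    ∫ s in a..b, heatSemigroup d (t - s)
      (cutoffSource d (t - s) x ψ (fun y => w y s) fun y => g y s) x := by
  have hpos : ∀ s ∈ Icc a b, 0 < t - s := fun s hs => sub_pos.2 (hs.2.trans_lt hbt)
  have hback : ContinuousOn (fun p : EuclideanSpace ℝ (Fin N) × ℝ => (p.1, t - p.2))
      (univ ×ˢ Icc a b) := by fun_prop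
  have hmaps : MapsTo (fun p : EuclideanSpace ℝ (Fin N) × ℝ => (p.1, t - p.2))
      (univ ×ˢ Icc a b) {p | 0 < p.2} := fun p hp => hpos p.2 hp.2
  have hψ₁ : ContinuousOn (fun p : EuclideanSpace ℝ (Fin N) × ℝ => ψ p.1) (univ ×ˢ Icc a b) :=
    (hψ.continuous.comp continuous_fst).continuousOn
  have hweak := hw.integral_mul_sub_integral_mul_eq
    (φ := fun y s => ψ y * heatKer N d (t - s) x y)
    (φ' := fun y s => ψ y * -(d * Lap (heatKer N d (t - s) x) y)) hab hψc
    (fun y hy s => by simp [image_eq_zero_of_notMem_tsupport hy])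
    (fun s _ => hψ.mul (contDiff_heatKer d (t - s) x))
    (fun y s hs => by
      simpa using ((hasDerivAt_heatKer hd (hpos s hs) x y).comp_const_sub t s).const_mul (ψ y))
    (hψ₁.mul ((continuousOn_heatKer hd x).comp hback hmaps))
    (hψ₁.mul (((continuousOn_lap_heatKer hd x).comp hback hmaps).const_mul d).neg)
  rw [← integral_heatKer_mul hd (sub_pos.2 hbt),
    ← integral_heatKer_mul hd (sub_pos.2 (hab.trans_lt hbt))]
  convert hweak using 1
  · congr 2 <;> (funext y; ring)
  · refine intervalIntegral.integral_congr fun s hs => ?_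
    rw [uIcc_of_le hab] at hs
    simp only [← integral_heatKer_mul hd (hpos s hs), lap_mul_heatKer hd (hpos s hs) hψ,
      cutoffSource]
    congr 1
    funext y
    ring

theorem continuousOn_cutoffSource_comp_smul (hw : IsHeatSolution d w g) {T : Set (ℝ × ℝ)}
    (hT : ∀ p ∈ T, p.2 < t) {ψ : EuclideanSpace ℝ (Fin N) → ℝ} (hψ : ContDiff ℝ 2 ψ) :
    ContinuousOn (Function.uncurry fun p : ℝ × ℝ => cutoffSource d (t - p.2) x
      (fun z => ψ (p.1 • z)) (fun y => w y p.2) fun y => g y p.2) (T ×ˢ univ) := by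
  have hscale : Continuous fun q : (ℝ × ℝ) × EuclideanSpace ℝ (Fin N) => q.1.1 • q.2 := by fun_prop
  have hψ₀ := hψ.continuous
  have hψ₁ := hψ.continuous_fderiv two_ne_zero
  have hψ₂ := continuous_lap_of_contDiff hψ
  have hwc : Continuous fun q : (ℝ × ℝ) × EuclideanSpace ℝ (Fin N) => w q.2 q.1.2 :=
    hw.continuous.comp (continuous_snd.prodMk (continuous_snd.comp continuous_fst))
  have hgc : Continuous fun q : (ℝ × ℝ) × EuclideanSpace ℝ (Fin N) => g q.2 q.1.2 :=
    hw.continuous_source.comp (continuous_snd.prodMk (continuous_snd.comp continuous_fst))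
  have hgrad : ContinuousOn (fun q : (ℝ × ℝ) × EuclideanSpace ℝ (Fin N) =>
      q.1.1 * fderiv ℝ ψ (q.1.1 • q.2) (x - q.2) / (t - q.1.2)) (T ×ˢ univ) :=
    ContinuousOn.div (by fun_prop) (by fun_prop) fun q hq => (sub_pos.2 (hT q.1 hq.1)).ne'
  have hcutoff : ContinuousOn (fun q : (ℝ × ℝ) × EuclideanSpace ℝ (Fin N) =>
      ψ (q.1.1 • q.2) * g q.2 q.1.2 + (d * (q.1.1 ^ 2 * Lap ψ (q.1.1 • q.2)) +
        q.1.1 * fderiv ℝ ψ (q.1.1 • q.2) (x - q.2) / (t - q.1.2)) * w q.2 q.1.2) (T ×ˢ univ) :=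
    ((hψ₀.comp hscale).mul hgc).continuousOn.add
      (((continuous_const.mul (((continuous_fst.comp continuous_fst).pow 2).mul
        (hψ₂.comp hscale))).continuousOn.add hgrad).mul hwc.continuousOn)
  simpa only [Function.uncurry_def, cutoffSource_comp_smul hψ] using hcutoff

theorem continuousOn_heatSemigroup_comp_smul_mul (hw : IsHeatSolution d w g) (hd : 0 < d)
    {ψ : EuclideanSpace ℝ (Fin N) → ℝ} (hψ : Continuous ψ) {C₀ M s : ℝ} (h₀ : ∀ z, ‖ψ z‖ ≤ C₀)
    (hwM : ∀ y, |w y s| ≤ M) (T : Set ℝ) (σ : ℝ) :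
    ContinuousOn (fun ε => heatSemigroup d σ (fun y => ψ (ε • y) * w y s) x) T := by
  have hws := (hw.contDiff_space s).continuous
  refine continuousOn_heatSemigroup (C := C₀ * M) (β := σ) hd continuousOn_const
    (fun _ _ => le_rfl) (Continuous.continuousOn ?_) fun ε _ y => ?_
  · simp only [Function.uncurry_def]
    fun_prop
  · have hψw : |ψ (ε • y) * w y s| ≤ C₀ * M := by
      rw [abs_mul]
      exact mul_le_mul (h₀ _) (hwM y) (abs_nonneg _) ((norm_nonneg _).trans (h₀ 0))
    exact hψw.trans (le_mul_of_one_le_right ((abs_nonneg _).trans hψw) (by simp))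

theorem continuousOn_intervalIntegral_heatSemigroup_cutoffSource (hw : IsHeatSolution d w g)
    (hd : 0 < d) (hab : a ≤ b) (hbt : b < t) {ψ : EuclideanSpace ℝ (Fin N) → ℝ}
    (hψ : ContDiff ℝ 2 ψ) (hψc : HasCompactSupport ψ) {M : ℝ}
    (hwM : ∀ s ∈ Icc a b, ∀ y, |w y s| ≤ M) (hgM : ∀ s ∈ Icc a b, ∀ y, |g y s| ≤ M) :
    ContinuousOn (fun ε => ∫ s in a..b, heatSemigroup d (t - s) (cutoffSource d (t - s) x
      (fun z => ψ (ε • z)) (fun y => w y s) fun y => g y s) x) (Icc (0 : ℝ) 1) := by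
  obtain ⟨C₀, h₀⟩ := hψc.exists_bound_of_continuous hψ.continuous
  obtain ⟨C₁, h₁⟩ := (hψc.fderiv ℝ).exists_bound_of_continuous (hψ.continuous_fderiv two_ne_zero)
  obtain ⟨C₂, h₂⟩ :=
    (hasCompactSupport_lap hψc).exists_bound_of_continuous (continuous_lap_of_contDiff hψ)
  exact continuousOn_intervalIntegral_of_isCompact isCompact_Icc hab
    (continuousOn_heatSemigroup (P := ℝ × ℝ) (T := Icc (0 : ℝ) 1 ×ˢ Icc a b)
      (σ := fun p => t - p.2) (β := t - a) hd (by fun_prop)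
      (fun p hp => sub_le_sub_left hp.2.1 t)
      (hw.continuousOn_cutoffSource_comp_smul (fun p hp => hp.2.2.trans_lt hbt) hψ)
      fun p hp y => abs_cutoffSource_comp_smul_le hd hψ hp.1 (sub_pos.2 hbt)
        (sub_le_sub_left hp.2.2 t) h₀ h₁ h₂ (hwM p.2 hp.2 y) (hgM p.2 hp.2 y))

theorem heatSemigroup_sub_eq_of_lt (hw : IsHeatSolution d w g) (hd : 0 < d) (hab : a ≤ b)
    (hbt : b < t) {M : ℝ} (hwM : ∀ s ∈ Icc a b, ∀ y, |w y s| ≤ M)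
    (hgM : ∀ s ∈ Icc a b, ∀ y, |g y s| ≤ M) (x : EuclideanSpace ℝ (Fin N)) :
    heatSemigroup d (t - b) (fun y => w y b) x - heatSemigroup d (t - a) (fun y => w y a) x =
      ∫ s in a..b, heatSemigroup d (t - s) (fun y => g y s) x := by
  let ψ : ContDiffBump (0 : EuclideanSpace ℝ (Fin N)) := default
  have hψ : ContDiff ℝ 2 ψ := ψ.contDiff
  have hψ0 : ψ 0 = 1 := ψ.one_of_mem_closedBall (Metric.mem_closedBall_self ψ.rIn_pos.le)
  obtain ⟨C₀, h₀⟩ := ψ.hasCompactSupport.exists_bound_of_continuous hψ.continuous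
  have hpos : EqOn
      (fun ε : ℝ => heatSemigroup d (t - b) (fun y => ψ (ε • y) * w y b) x -
        heatSemigroup d (t - a) (fun y => ψ (ε • y) * w y a) x)
      (fun ε => ∫ s in a..b, heatSemigroup d (t - s) (cutoffSource d (t - s) x
        (fun z => ψ (ε • z)) (fun y => w y s) fun y => g y s) x) (Ioc 0 1) := fun ε hε =>
    hw.heatSemigroup_mul_sub_eq hd hab hbt (hψ.comp (contDiff_const_smul ε))
      (ψ.hasCompactSupport.comp_smul hε.1.ne') x
  have hzero := hpos.of_subset_closure
    ((hw.continuousOn_heatSemigroup_comp_smul_mul hd hψ.continuous h₀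
      (hwM b (right_mem_Icc.2 hab)) _ _).sub
      (hw.continuousOn_heatSemigroup_comp_smul_mul hd hψ.continuous h₀
        (hwM a (left_mem_Icc.2 hab)) _ _))
    (hw.continuousOn_intervalIntegral_heatSemigroup_cutoffSource hd hab hbt hψ
      ψ.hasCompactSupport hwM hgM)
    Ioc_subset_Icc_self (closure_Ioc zero_ne_one).ge (left_mem_Icc.2 zero_le_one)
  have hsource : ∀ s, cutoffSource d (t - s) x (fun z => ψ ((0 : ℝ) • z)) (fun y => w y s)
      (fun y => g y s) = fun y => g y s := fun s => funext fun y => by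
    rw [cutoffSource_comp_smul hψ]
    simp [hψ0]
  simp only [hsource] at hzero
  simpa only [zero_smul, hψ0, one_mul] using hzero

theorem sub_heatSemigroup_eq_intervalIntegral (hw : IsHeatSolution d w g) (hd : 0 < d)
    (hat : a < t) {M : ℝ} (hwM : ∀ s ∈ Icc a t, ∀ y, |w y s| ≤ M)
    (hgM : ∀ s ∈ Icc a t, ∀ y, |g y s| ≤ M) (x : EuclideanSpace ℝ (Fin N)) :
    w x t - heatSemigroup d (t - a) (fun y => w y a) x =
      ∫ s in a..t, heatSemigroup d (t - s) (fun y => g y s) x := by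
  have hlt : EqOn
      (fun b => heatSemigroup d (t - b) (fun y => w y b) x -
        heatSemigroup d (t - a) (fun y => w y a) x)
      (fun b => ∫ s in a..b, heatSemigroup d (t - s) (fun y => g y s) x) (Ico a t) := fun b hb =>
    hw.heatSemigroup_sub_eq_of_lt hd hb.1 hb.2 (fun s hs => hwM s ⟨hs.1, hs.2.trans hb.2.le⟩)
      (fun s hs => hgM s ⟨hs.1, hs.2.trans hb.2.le⟩) x
  have hsource := continuousOn_heatSemigroup_sub (x := x) hd hw.continuous_source hgM
  have hprim : ContinuousOn (fun b => ∫ s in a..b, heatSemigroup d (t - s) (fun y => g y s) x)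
      (Icc a t) := by
    rw [← uIcc_of_le hat.le] at hsource ⊢
    exact intervalIntegral.continuousOn_primitive_interval hsource.integrableOn_uIcc
  have hend := hlt.of_subset_closure
    ((continuousOn_heatSemigroup_sub hd hw.continuous hwM).sub continuousOn_const) hprim
    Ico_subset_Icc_self (closure_Ico hat.ne).ge (right_mem_Icc.2 hat.le)
  simpa only [sub_self, heatSemigroup_zero hd] using hend

theorem eq_setIntegral_heatSemigroup (hw : IsHeatSolution d w g) (hd : 0 < d) {μ M : ℝ}
    (hμ : 0 < μ) (hwM : ∀ y s, |w y s| ≤ M * Real.exp (μ * s))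
    (hgM : ∀ y s, |g y s| ≤ M * Real.exp (μ * s)) (x : EuclideanSpace ℝ (Fin N)) (t : ℝ) :
    w x t = ∫ s in Iio t, heatSemigroup d (t - s) (fun y => g y s) x := by
  have hM : 0 ≤ M := by simpa using (abs_nonneg _).trans (hwM 0 0)
  have hmono : ∀ a, ∀ s ∈ Icc a t, M * Real.exp (μ * s) ≤ M * Real.exp (μ * t) := fun a s hs =>
    mul_le_mul_of_nonneg_left (Real.exp_le_exp.2 (mul_le_mul_of_nonneg_left hs.2 hμ.le)) hM
  have hduhamel : ∀ᶠ a in Filter.atBot, w x t - heatSemigroup d (t - a) (fun y => w y a) x =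
      ∫ s in a..t, heatSemigroup d (t - s) (fun y => g y s) x :=
    (Filter.eventually_lt_atBot t).mono fun a hat => hw.sub_heatSemigroup_eq_intervalIntegral hd hat
      (fun s hs y => (hwM y s).trans (hmono a s hs))
      (fun s hs y => (hgM y s).trans (hmono a s hs)) x
  have hinitial : Filter.Tendsto (fun a => heatSemigroup d (t - a) (fun y => w y a) x)
      Filter.atBot (nhds 0) := by
    refine squeeze_zero_norm (fun a => abs_heatSemigroup_le hd fun y => hwM y a) ?_
    simpa using (Real.tendsto_exp_atBot.comp
      (Filter.tendsto_id.const_mul_atBot hμ)).const_mul M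
  have hint : IntegrableOn (fun s => heatSemigroup d (t - s) (fun y => g y s) x) (Iic t) := by
    refine ((integrableOn_exp_mul_Iic hμ t).const_mul M).mono' ?_
      (.of_forall fun s => abs_heatSemigroup_le hd fun y => hgM y s)
    refine (aecover_Ici Filter.tendsto_id).restrict.aestronglyMeasurable fun a => ?_
    rw [Measure.restrict_restrict measurableSet_Ici, Ici_inter_Iic]
    exact (continuousOn_heatSemigroup_sub hd hw.continuous_source fun s hs y =>
      (hgM y s).trans (hmono a s hs)).aestronglyMeasurable measurableSet_Icc
  rw [← integral_Iic_eq_integral_Iio]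
  refine tendsto_nhds_unique ?_ (intervalIntegral_tendsto_integral_Iic t hint Filter.tendsto_id)
  simpa using (hinitial.const_sub (w x t)).congr' hduhamel

theorem exp_mul {f : EuclideanSpace ℝ (Fin N) → ℝ → ℝ} {μ : ℝ}
    (hw : IsHeatSolution d w fun x s => f x s - μ * w x s) :
    IsHeatSolution d (fun x s => Real.exp (μ * s) * w x s) fun x s => Real.exp (μ * s) * f x s := by
  have hexp : ∀ s, HasDerivAt (fun r => Real.exp (μ * r)) (μ * Real.exp (μ * s)) s := fun s => by
    simpa [mul_comm] using ((hasDerivAt_id s).const_mul μ).exp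
  have hderiv : ∀ x s, deriv (fun r => Real.exp (μ * r) * w x r) s =
      μ * Real.exp (μ * s) * w x s + Real.exp (μ * s) * deriv (w x) s :=
    fun x s => ((hexp s).mul (hw.hasDerivAt x s)).deriv
  have hlap : ∀ x s, Lap (fun y => Real.exp (μ * s) * w y s) x =
      Real.exp (μ * s) * Lap (fun y => w y s) x := fun x s =>
    lap_const_mul (hw.contDiff_space s) _ x
  have hwc := hw.continuous
  have hwd := hw.continuous_deriv
  have hwl := hw.continuous_lap
  exact
    { contDiff_time := fun x => ContDiff.mul (by fun_prop) (hw.contDiff_time x)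
      contDiff_space := fun s => contDiff_const.mul (hw.contDiff_space s)
      continuous := by fun_prop
      continuous_deriv := by
        simp only [hderiv]
        fun_prop
      continuous_lap := by
        simp only [hlap]
        fun_prop
      deriv_eq := fun x s => by
        rw [hderiv, hlap, hw.deriv_eq]
        ring }

theorem eq_setIntegral_of_damped {f : EuclideanSpace ℝ (Fin N) → ℝ → ℝ} {μ M : ℝ}
    (hw : IsHeatSolution d w fun x s => f x s - μ * w x s) (hd : 0 < d) (hμ : 0 < μ)
    (hwM : ∀ y s, |w y s| ≤ M) (hfM : ∀ y s, |f y s| ≤ M) (x : EuclideanSpace ℝ (Fin N)) (t : ℝ) :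
    w x t = ∫ s in Iio t, ∫ y, heatKer N d (t - s) x y * Real.exp (-(μ * (t - s))) * f y s := by
  have hweight : ∀ {h : EuclideanSpace ℝ (Fin N) → ℝ → ℝ}, (∀ y s, |h y s| ≤ M) →
      ∀ y s, |Real.exp (μ * s) * h y s| ≤ M * Real.exp (μ * s) := fun hh y s => by
    rw [abs_mul, Real.abs_exp, mul_comm]
    exact mul_le_mul_of_nonneg_right (hh y s) (Real.exp_pos _).le
  have hexp : ∀ s, Real.exp (-(μ * (t - s))) = Real.exp (-(μ * t)) * Real.exp (μ * s) := fun s => by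
    rw [← Real.exp_add]
    ring_nf
  calc w x t = Real.exp (-(μ * t)) * (Real.exp (μ * t) * w x t) := by
        rw [← mul_assoc, ← Real.exp_add, neg_add_cancel, Real.exp_zero, one_mul]
    _ = Real.exp (-(μ * t)) *
          ∫ s in Iio t, heatSemigroup d (t - s) (fun y => Real.exp (μ * s) * f y s) x := by
        rw [← hw.exp_mul.eq_setIntegral_heatSemigroup hd hμ (hweight hwM) (hweight hfM) x t]
    _ = ∫ s in Iio t, ∫ y, heatKer N d (t - s) x y * Real.exp (-(μ * (t - s))) * f y s := by
        rw [← integral_const_mul]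
        refine setIntegral_congr_fun measurableSet_Iio fun s hs => ?_
        rw [heatSemigroup_const_mul, ← mul_assoc, ← hexp, ← heatSemigroup_const_mul,
          ← integral_heatKer_mul hd (sub_pos.2 hs)]
        simp only [mul_assoc]

end IsHeatSolution

theorem stmt19_general {N : ℕ} {d τ : ℝ} (hd : 0 < d) (hτ : 0 < τ)
    {v h : EuclideanSpace ℝ (Fin N) → ℝ → ℝ}
    (hvt : ∀ x, ContDiff ℝ 1 (v x)) (hvx : ∀ t, ContDiff ℝ 2 (fun y => v y t))
    (hvjc : Continuous (fun p : EuclideanSpace ℝ (Fin N) × ℝ => v p.1 p.2))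
    (hvdc : Continuous (fun p : EuclideanSpace ℝ (Fin N) × ℝ => deriv (v p.1) p.2))
    (hvlc : Continuous (fun p : EuclideanSpace ℝ (Fin N) × ℝ => Lap (fun y => v y p.2) p.1))
    (hvb : ∃ C : ℝ, ∀ x t, |v x t| ≤ C) (hhb : ∃ C : ℝ, ∀ x t, |h x t| ≤ C)
    (heq : ∀ x t, deriv (v x) t = d * Lap (fun y => v y t) x + (1 / τ) * (h x t - v x t))
    (x : EuclideanSpace ℝ (Fin N)) (t : ℝ) :
    v x t = ∫ s in Iio t, ∫ y,
      heatKer N d (t - s) x y * ((1 / τ) * Real.exp (-(t - s) / τ)) * h y s := by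
  obtain ⟨A, hA⟩ := hvb
  obtain ⟨B, hB⟩ := hhb
  have hμ : 0 < 1 / τ := one_div_pos.2 hτ
  have hv : IsHeatSolution d v fun x s => 1 / τ * h x s - 1 / τ * v x s :=
    ⟨hvt, hvx, hvjc, hvdc, hvlc, fun x s => by rw [heq, mul_sub]⟩
  have hsource : ∀ y s, |1 / τ * h y s| ≤ max A (1 / τ * B) := fun y s => by
    rw [abs_mul, abs_of_pos hμ]
    exact (mul_le_mul_of_nonneg_left (hB y s) hμ.le).trans (le_max_right _ _)
  rw [hv.eq_setIntegral_of_damped hd hμ (fun y s => (hA y s).trans (le_max_left _ _)) hsource x t]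
  refine integral_congr_ae (.of_forall fun s => integral_congr_ae (.of_forall fun y => ?_))
  simp only [neg_div, one_div_mul_eq_div]
  ring

/-- an entire bounded solution of the two-component reaction-diffusion
system on ℝᴺ gives rise to an entire solution of the nonlocal delay equation with the
weak kernel g_w(t) = (1/τ)e^{−t/τ}: v is the spatiotemporal convolution g_w ∗∗ H(u),
and hence ∂ₜu = dΔu + F(u, g_w ∗∗ H(u)). -/
theorem stmt19 (N : ℕ) (hN : 1 ≤ N) (d τ : ℝ) (hd : 0 < d) (hτ : 0 < τ)
    (F : ℝ → ℝ → ℝ) (H : ℝ → ℝ)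
    (hFc : Continuous (Function.uncurry F)) (hHc : Continuous H)
    (u v : EuclideanSpace ℝ (Fin N) → ℝ → ℝ)
    -- regularity: C¹ in time, C² in space, with jointly continuous derivatives
    (hut : ∀ x, ContDiff ℝ 1 (u x)) (hvt : ∀ x, ContDiff ℝ 1 (v x))
    (hux : ∀ t, ContDiff ℝ 2 (fun y => u y t)) (hvx : ∀ t, ContDiff ℝ 2 (fun y => v y t))
    (hujc : Continuous (fun p : EuclideanSpace ℝ (Fin N) × ℝ => u p.1 p.2))
    (hvjc : Continuous (fun p : EuclideanSpace ℝ (Fin N) × ℝ => v p.1 p.2))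
    (hudc : Continuous (fun p : EuclideanSpace ℝ (Fin N) × ℝ => deriv (u p.1) p.2))
    (hvdc : Continuous (fun p : EuclideanSpace ℝ (Fin N) × ℝ => deriv (v p.1) p.2))
    (hulc : Continuous (fun p : EuclideanSpace ℝ (Fin N) × ℝ => Lap (fun y => u y p.2) p.1))
    (hvlc : Continuous (fun p : EuclideanSpace ℝ (Fin N) × ℝ => Lap (fun y => v y p.2) p.1))
    -- boundedness of v and of H ∘ u
    (hvb : ∃ C : ℝ, ∀ x t, |v x t| ≤ C)
    (hHub : ∃ C : ℝ, ∀ x t, |H (u x t)| ≤ C)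
    -- the reaction-diffusion system, for all (x, t) ∈ ℝᴺ × ℝ
    (heq1 : ∀ x t, deriv (u x) t = d * Lap (fun y => u y t) x + F (u x t) (v x t))
    (heq2 : ∀ x t, deriv (v x) t
      = d * Lap (fun y => v y t) x + (1 / τ) * (H (u x t) - v x t)) :
    -- conclusion: v = g_w ∗∗ H(u), and u solves the nonlocal delay equation
    (∀ x t, v x t = ∫ s in Iio t, ∫ y,
        heatKer N d (t - s) x y * ((1 / τ) * Real.exp (-(t - s) / τ)) * H (u y s)) ∧
    (∀ x t, deriv (u x) t = d * Lap (fun y => u y t) x +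
        F (u x t) (∫ s in Iio t, ∫ y,
          heatKer N d (t - s) x y * ((1 / τ) * Real.exp (-(t - s) / τ)) * H (u y s))) := by
  have key := stmt19_general hd hτ hvt hvx hvjc hvdc hvlc hvb hHub heq2
  exact ⟨key, fun x t => by rw [← key x t]; exact heq1 x t⟩
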